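/- arXiv:0811.4230 — 3 statements merged into one kernel-verified Lean document; each statement's English description precedes it below -/
import Mathlib

section
/- Let (X,T) be a topological dynamical system and K ⊆ X a compact subset with h(T,K) > 0. Then there exists a countably infinite compact subset K_∞ ⊆ K such that h(T,K_∞) = 0. -/
open Filter Set Metric MeasureTheory
open scoped ENNReal Topology

noncomputable section

variable {X Y : Type*}

def IsSep [PseudoMetricSpace X] (T : X → X) (n : ℕ) (ε : ℝ) (E : Set X) : Prop :=
  E.Pairwise fun x y => ∃ i < n, ε < dist (T^[i] x) (T^[i] y)

def sepMaxCard [PseudoMetricSpace X] (T : X → X) (n : ℕ) (ε : ℝ) (K : Set X) : ℝ≥0∞ :=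
  ⨆ (E : Finset X) (_ : ↑E ⊆ K ∧ IsSep T n ε (↑E : Set X)), (E.card : ℝ≥0∞)

def sepEnt [PseudoMetricSpace X] (T : X → X) (ε : ℝ) (K : Set X) : EReal :=
  Filter.atTop.limsup fun n : ℕ => ENNReal.log (sepMaxCard T n ε K) / (n : EReal)

def subEnt [PseudoMetricSpace X] (T : X → X) (K : Set X) : EReal :=
  ⨆ (ε : ℝ) (_ : 0 < ε), sepEnt T ε K

/-- `(X,T)` is lowerable. -/
def Lowerable [PseudoMetricSpace X] (T : X → X) : Prop :=
  ∀ h : EReal, 0 ≤ h → h ≤ subEnt T (univ : Set X) →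
    ∃ K : Set X, K.Nonempty ∧ IsCompact K ∧ subEnt T K = h

/-- `(X,T)` is hereditarily lowerable. -/
def HerLowerable [PseudoMetricSpace X] (T : X → X) : Prop :=
  ∀ K : Set X, K.Nonempty → IsCompact K → ∀ h : EReal, 0 ≤ h → h ≤ subEnt T K →
    ∃ K' : Set X, K' ⊆ K ∧ K'.Nonempty ∧ IsCompact K' ∧ subEnt T K' = h

/-- `(X,T)` is hereditarily uniformly lowerable: the lowering subset can moreover be chosen
with at most one limit (accumulation) point. -/
def HUL [PseudoMetricSpace X] (T : X → X) : Prop :=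
  ∀ K : Set X, K.Nonempty → IsCompact K → ∀ h : EReal, 0 ≤ h → h ≤ subEnt T K →
    ∃ K' : Set X, K' ⊆ K ∧ K'.Nonempty ∧ IsCompact K' ∧ subEnt T K' = h ∧
      {x | AccPt x (𝓟 K')}.Subsingleton

/-- `Φ_ε(x) = {y : d(T^n x, T^n y) ≤ ε for all n ≥ 0}`. -/
def Phi [PseudoMetricSpace X] (T : X → X) (ε : ℝ) (x : X) : Set X :=
  {y | ∀ n : ℕ, dist (T^[n] x) (T^[n] y) ≤ ε}

/-- `h*_T(ε) = sup_x h(T, Φ_ε(x))`. -/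
def hStar [PseudoMetricSpace X] (T : X → X) (ε : ℝ) : EReal :=
  ⨆ x : X, subEnt T (Phi T ε x)

/-- `(X,T)` is asymptotically `h`-expansive: `h*_T(ε) → 0` as `ε → 0+`. -/
def AsympHExpansive [PseudoMetricSpace X] (T : X → X) : Prop :=
  Tendsto (fun ε : ℝ => hStar T ε) (𝓝[>] 0) (𝓝 (0 : EReal))

/-- `T^n` for `n : ℤ`, for a homeomorphism `T`. -/
def iterZ [TopologicalSpace X] (T : X ≃ₜ X) : ℤ → X → X
  | Int.ofNat n => (⇑T)^[n]
  | Int.negSucc n => (⇑T.symm)^[n + 1]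

/-- `T` is expansive with expansive constant `δ`. -/
def ExpansiveWith [MetricSpace X] (T : X ≃ₜ X) (δ : ℝ) : Prop :=
  ∀ x y : X, x ≠ y → ∃ n : ℤ, δ < dist (iterZ T n x) (iterZ T n y)

/-- `K ⪰ 𝒲` : `K` is contained in some member of the family `𝒲`. -/
def Refines (K : Set X) (W : Finset (Set X)) : Prop := ∃ A ∈ W, K ⊆ A

/-- The join `U ∨ V` of two finite covers. -/
def covJoin (U V : Finset (Set X)) : Finset (Set X) :=
  letI := Classical.decEq (Set X)
  (U ×ˢ V).image fun p => p.1 ∩ p.2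

/-- `dynCov T U n = U_0^{n-1} = ⋁_{i=0}^{n-1} T^{-i} U` (with `U_0^{-1} = {univ}`). -/
def dynCov (T : X → X) (U : Finset (Set X)) : ℕ → Finset (Set X)
  | 0 => {(univ : Set X)}
  | n + 1 =>
      letI := Classical.decEq (Set X)
      covJoin (dynCov T U n) (U.image fun A => T^[n] ⁻¹' A)

/-- `n_{T,U}(K)`: `0` if `K ⋠ U`; `+∞` if `T^i K ⪰ U` for all `i`; otherwise the largest `j`
with `T^i K ⪰ U` for all `0 ≤ i ≤ j-1`. -/
def nTU (T : X → X) (U : Finset (Set X)) (K : Set X) : ℕ∞ :=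
  ⨆ (j : ℕ) (_ : ∀ i < j, Refines (T^[i] '' K) U), (j : ℕ∞)

/-- `e^{-λ n}` for `n : ℕ∞`, valued in `ℝ≥0∞` (with the conventions `e^{-λ·∞} = 0` for `λ > 0`,
`= 1` for `λ = 0` and `= ∞` for `λ < 0`). -/
def expWeight (lam : ℝ) (n : ℕ∞) : ℝ≥0∞ :=
  if n = ⊤ then (if 0 < lam then 0 else if lam = 0 then 1 else ⊤)
  else ENNReal.ofReal (Real.exp (-(lam * (n.toNat : ℝ))))

/-- `m_{T,U}(K,λ,k)`: the infimum of `∑_{E ∈ 𝓔} e^{-λ n_{T,U}(E)}` over all countable families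
`𝓔` of subsets of `X` with `∪𝓔 ⊇ K` and `E ⪰ U_0^{k-1}` for every `E ∈ 𝓔`. -/
def mTU (T : X → X) (U : Finset (Set X)) (K : Set X) (lam : ℝ) (k : ℕ) : ℝ≥0∞ :=
  ⨅ (ℰ : Set (Set X)) (_ : ℰ.Countable ∧ K ⊆ ⋃₀ ℰ ∧ ∀ E ∈ ℰ, Refines E (dynCov T U k)),
    ∑' E : ℰ, expWeight lam (nTU T U (E : Set X))

/-- `m_{T,U}(K,λ) = lim_{k→∞} m_{T,U}(K,λ,k)`; since `m_{T,U}(K,λ,k)` is nondecreasing in `k`,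
the limit is the supremum. -/
def mTUlim (T : X → X) (U : Finset (Set X)) (K : Set X) (lam : ℝ) : ℝ≥0∞ :=
  ⨆ k : ℕ, mTU T U K lam k

/-- `h^B_U(T,K) = inf {λ : m_{T,U}(K,λ) = 0}`. -/
def hBU (T : X → X) (U : Finset (Set X)) (K : Set X) : EReal :=
  ⨅ (lam : ℝ) (_ : mTUlim T U K lam = 0), (lam : EReal)

/-- The dimensional entropy `h^B(T,K) = sup_U h^B_U(T,K)`, supremum over finite open covers. -/
def hB [TopologicalSpace X] (T : X → X) (K : Set X) : EReal :=
  ⨆ (U : Finset (Set X)) (_ : (∀ A ∈ U, IsOpen A) ∧ ⋃₀ (↑U : Set (Set X)) = univ),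
    hBU T U K

/-- `N(U,K)`: the minimal cardinality of a subfamily of `U` covering `K` (`0` for `K = ∅`,
`∞` if no subfamily covers `K`). -/
def covCard (U : Finset (Set X)) (K : Set X) : ℝ≥0∞ :=
  ⨅ (V : Finset (Set X)) (_ : V ⊆ U ∧ K ⊆ ⋃₀ (↑V : Set (Set X))), (V.card : ℝ≥0∞)

/-- `h_U(T,K) = limsup_{n→∞} (1/n) log N(U_0^{n-1},K)`. -/
def hCov (T : X → X) (U : Finset (Set X)) (K : Set X) : EReal :=
  Filter.atTop.limsup fun n : ℕ => ENNReal.log (covCard (dynCov T U n) K) / (n : EReal)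

/-- Topological entropy of a subset via open covers: `h(T,K) = sup_U h_U(T,K)`. -/
def hCovSup [TopologicalSpace X] (T : X → X) (K : Set X) : EReal :=
  ⨆ (U : Finset (Set X)) (_ : (∀ A ∈ U, IsOpen A) ∧ ⋃₀ (↑U : Set (Set X)) = univ),
    hCov T U K

/-- The atom of the (finite) partition `P` containing `x`. -/
def atomAt (P : Finset (Set X)) (x : X) : Set X := ⋃₀ {A | A ∈ P ∧ x ∈ A}

/-- `P` is a finite Borel partition. -/
def IsFinPartition [MeasurableSpace X] (P : Finset (Set X)) : Prop :=
  (∀ A ∈ P, MeasurableSet A) ∧ ⋃₀ (↑P : Set (Set X)) = univ ∧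
    (↑P : Set (Set X)).Pairwise fun A B => Disjoint A B

/-- The Shannon entropy `H_μ(P) = ∑_{A ∈ P} -μ(A) log μ(A)` of a finite partition. -/
def partEnt [MeasurableSpace X] (μ : Measure X) (P : Finset (Set X)) : ℝ :=
  ∑ A ∈ P, -((μ A).toReal * Real.log (μ A).toReal)

/-- The measure-theoretic (Kolmogorov–Sinai) entropy `h_μ(T)`: the supremum over finite Borel
partitions `P` of `lim_n (1/n) H_μ(P_0^{n-1})`; by subadditivity this limit is the infimum. -/
def ksEntropy [MeasurableSpace X] (T : X → X) (μ : Measure X) : EReal :=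
  ⨆ (P : Finset (Set X)) (_ : IsFinPartition P),
    ⨅ n : ℕ, ((partEnt μ (dynCov T P (n + 1)) / (n + 1) : ℝ) : EReal)

/-- `π` is a principal factor map from `(X,T)` to `(Y,S)` : `h_μ(T) = h_{πμ}(S)` for every
`T`-invariant Borel probability measure `μ`. -/
def IsPrincipal [MeasurableSpace X] [MeasurableSpace Y] (T : X → X) (S : Y → Y)
    (π : X → Y) : Prop :=
  ∀ μ : Measure X, IsProbabilityMeasure μ → Measure.map T μ = μ →
    ksEntropy T μ = ksEntropy S (Measure.map π μ)

/-- The relative topological entropy `h_top(T,X|π) = sup_{y ∈ Y} h(T, π^{-1}(y))`. -/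
def relEnt [PseudoMetricSpace X] (T : X → X) (π : X → Y) : EReal :=
  ⨆ y : Y, subEnt T (π ⁻¹' {y})

/-- The canonical conversion `EReal → ℝ≥0∞` (`⊥` and negative reals go to `0`). -/
def erealToENNReal (x : EReal) : ℝ≥0∞ := if x = ⊤ then ⊤ else ENNReal.ofReal x.toReal

/-!
In an infinite compact set there is an injective sequence converging to some point `x`. By
continuity of the iterates of `T`, a subsequence `u` converges so fast that the orbit of `u k` stays
close to the orbit of `x` up to time `k`. Then `insert x (range u)` has zero entropy: at scale `ε`
and for large `n`, all `u k` with `k ≥ n` are indistinguishable from `x` up to time `n`, so an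
`(n, ε)`-separated subset has at most `n + 1` points.
-/

open ExpGrowth

theorem expGrowthSup_natCast : expGrowthSup (fun n : ℕ => (n : ℝ≥0∞)) = 0 := by
  have hlog : Tendsto (fun n : ℕ => Real.log n / n) atTop (𝓝 0) :=
    Real.isLittleO_log_id_atTop.tendsto_div_nhds_zero.comp tendsto_natCast_atTop_atTop
  refine Tendsto.limsup_eq (((continuous_coe_real_ereal.tendsto 0).comp hlog).congr' ?_)
  filter_upwards [eventually_gt_atTop 0] with n hn
  rw [← ENNReal.ofReal_natCast n, ENNReal.log_ofReal_of_pos (by exact_mod_cast hn)]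
  exact EReal.coe_div _ _

section Separated

variable [PseudoMetricSpace X] {T : X → X} {n : ℕ} {ε : ℝ} {K L : Set X}

theorem sepEnt_eq_expGrowthSup : sepEnt T ε K = expGrowthSup fun n => sepMaxCard T n ε K :=
  rfl

theorem card_le_sepMaxCard {E : Finset X} (hEK : (E : Set X) ⊆ K) (hE : IsSep T n ε (E : Set X)) :
    (E.card : ℝ≥0∞) ≤ sepMaxCard T n ε K :=
  le_iSup₂_of_le E ⟨hEK, hE⟩ le_rfl

theorem one_le_sepMaxCard (hK : K.Nonempty) : 1 ≤ sepMaxCard T n ε K := by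
  obtain ⟨x, hx⟩ := hK
  simpa using card_le_sepMaxCard (T := T) (n := n) (ε := ε) (E := {x}) (by simpa using hx)
    (by simp [IsSep])

theorem sepMaxCard_le_card (F : Finset X) : sepMaxCard T n ε (F : Set X) ≤ F.card :=
  iSup₂_le fun _ hE => by exact_mod_cast Finset.card_le_card (Finset.coe_subset.1 hE.1)

theorem sepMaxCard_mono (h : K ⊆ L) : sepMaxCard T n ε K ≤ sepMaxCard T n ε L :=
  iSup₂_le fun _ hE => card_le_sepMaxCard (hE.1.trans h) hE.2

theorem sepMaxCard_union_le :
    sepMaxCard T n ε (K ∪ L) ≤ sepMaxCard T n ε K + sepMaxCard T n ε L := by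
  classical
  refine iSup₂_le fun E ⟨hEKL, hE⟩ => ?_
  have hK : ((E.filter (· ∈ K)).card : ℝ≥0∞) ≤ sepMaxCard T n ε K :=
    card_le_sepMaxCard (fun y hy => (Finset.mem_filter.1 hy).2)
      (hE.mono (Finset.coe_subset.2 (Finset.filter_subset _ E)))
  have hL : ((E.filter (· ∉ K)).card : ℝ≥0∞) ≤ sepMaxCard T n ε L :=
    card_le_sepMaxCard
      (fun y hy => (hEKL (Finset.mem_filter.1 hy).1).resolve_left (Finset.mem_filter.1 hy).2)
      (hE.mono (Finset.coe_subset.2 (Finset.filter_subset _ E)))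
  calc (E.card : ℝ≥0∞) = (E.filter (· ∈ K)).card + (E.filter (· ∉ K)).card := by
        exact_mod_cast (Finset.card_filter_add_card_filter_not (s := E) (· ∈ K)).symm
    _ ≤ sepMaxCard T n ε K + sepMaxCard T n ε L := add_le_add hK hL

theorem sepMaxCard_le_one (h : ∀ x ∈ K, ∀ y ∈ K, ∀ i < n, dist (T^[i] x) (T^[i] y) ≤ ε) :
    sepMaxCard T n ε K ≤ 1 := by
  refine iSup₂_le fun E ⟨hEK, hE⟩ => ?_
  have hcard : E.card ≤ 1 := Finset.card_le_one.2 fun x hx y hy => by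
    by_contra hxy
    obtain ⟨i, hi, hlt⟩ := hE hx hy hxy
    exact (h x (hEK hx) y (hEK hy) i hi).not_gt hlt
  exact_mod_cast hcard

theorem subEnt_nonneg (hK : K.Nonempty) : 0 ≤ subEnt T K :=
  le_iSup₂_of_le 1 one_pos <| calc
    0 = expGrowthSup (fun _ => 1) := (expGrowthSup_const one_ne_zero ENNReal.one_ne_top).symm
    _ ≤ expGrowthSup fun n => sepMaxCard T n 1 K :=
        expGrowthSup_monotone fun _ => one_le_sepMaxCard hK
    _ = sepEnt T 1 K := sepEnt_eq_expGrowthSup.symm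

theorem sepEnt_nonpos_of_eventually_sepMaxCard_le {C : ℕ}
    (h : ∀ᶠ n : ℕ in atTop, sepMaxCard T n ε K ≤ n + C) : sepEnt T ε K ≤ 0 := by
  rw [sepEnt_eq_expGrowthSup, ← expGrowthSup_natCast]
  refine expGrowthSup_le_of_eventually_le (b := 2) ENNReal.ofNat_ne_top ?_
  filter_upwards [h, eventually_ge_atTop C] with n hn hCn
  calc sepMaxCard T n ε K ≤ n + C := hn
    _ ≤ n + n := by gcongr
    _ = 2 * n := (two_mul _).symm

theorem subEnt_nonpos_of_finite (hK : K.Finite) : subEnt T K ≤ 0 := by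
  refine iSup₂_le fun ε _ => ?_
  refine sepEnt_nonpos_of_eventually_sepMaxCard_le (C := hK.toFinset.card) <|
    Eventually.of_forall fun n => ?_
  calc sepMaxCard T n ε K = sepMaxCard T n ε hK.toFinset := by rw [hK.coe_toFinset]
    _ ≤ hK.toFinset.card := sepMaxCard_le_card _
    _ ≤ n + hK.toFinset.card := le_add_self

theorem infinite_of_subEnt_pos (hpos : 0 < subEnt T K) : K.Infinite :=
  fun hfin => (subEnt_nonpos_of_finite hfin).not_gt hpos

end Separated

section BowenTendsto

variable [PseudoMetricSpace X] {T : X → X} {u : ℕ → X} {x : X}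

/-- Convergence `d_{k+1}(u k, x) → 0`, where `d_n` is the `n`-th Bowen metric: the orbit of `u k`
follows that of `x` up to time `k`, with an error tending to `0`. Such fast
convergence makes the set of terms of `u` have zero entropy. -/
def BowenTendsto (T : X → X) (u : ℕ → X) (x : X) : Prop :=
  ∀ ε : ℝ, 0 < ε → ∀ᶠ k in atTop, ∀ i ≤ k, dist (T^[i] (u k)) (T^[i] x) < ε

theorem exists_strictMono_bowenTendsto (hT : Continuous T) (hu : Tendsto u atTop (𝓝 x)) :
    ∃ φ : ℕ → ℕ, StrictMono φ ∧ BowenTendsto T (u ∘ φ) x := by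
  have hclose (k : ℕ) : ∀ᶠ m in atTop, ∀ i ≤ k,
      dist (T^[i] (u m)) (T^[i] x) < 1 / ((k : ℝ) + 1) :=
    (eventually_all_finite (finite_Iic k)).2 fun i _ =>
      tendsto_nhds.1 (((hT.iterate i).tendsto x).comp hu) _ Nat.one_div_pos_of_nat
  obtain ⟨φ, hφ, hφclose⟩ := extraction_forall_of_eventually hclose
  refine ⟨φ, hφ, fun ε hε => ?_⟩
  filter_upwards [tendsto_one_div_add_atTop_nhds_zero_nat.eventually_lt_const hε] with k hk i hi
  exact (hφclose k i hi).trans hk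

namespace BowenTendsto

variable {ε : ℝ}

theorem eventually_sepMaxCard_insert_image_Ici_le_one (hu : BowenTendsto T u x) (hε : 0 < ε) :
    ∀ᶠ n in atTop, sepMaxCard T n ε (insert x (u '' Ici n)) ≤ 1 := by
  filter_upwards [eventually_forall_ge_atTop.2 (hu (ε / 2) (half_pos hε))] with n hn
  have hnear : ∀ y ∈ insert x (u '' Ici n), ∀ i < n, dist (T^[i] y) (T^[i] x) < ε / 2 := by
    rintro y (rfl | ⟨k, hk, rfl⟩) i hi
    · simpa using hε
    · exact hn k hk i (hi.le.trans hk)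
  refine sepMaxCard_le_one fun y hy z hz i hi => ?_
  calc dist (T^[i] y) (T^[i] z) ≤ dist (T^[i] y) (T^[i] x) + dist (T^[i] z) (T^[i] x) :=
        dist_triangle_right _ _ _
    _ ≤ ε / 2 + ε / 2 := add_le_add (hnear y hy i hi).le (hnear z hz i hi).le
    _ = ε := add_halves ε

theorem eventually_sepMaxCard_insert_range_le (hu : BowenTendsto T u x) (hε : 0 < ε) :
    ∀ᶠ n : ℕ in atTop, sepMaxCard T n ε (insert x (range u)) ≤ n + 1 := by
  classical
  filter_upwards [hu.eventually_sepMaxCard_insert_image_Ici_le_one hε] with n hn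
  have hsplit : insert x (range u) ⊆ ((Finset.range n).image u : Set X) ∪
      insert x (u '' Ici n) := by
    rintro y (rfl | ⟨k, rfl⟩)
    · exact Or.inr (mem_insert _ _)
    · rcases lt_or_ge k n with hk | hk
      · exact Or.inl (Finset.mem_image_of_mem u (Finset.mem_range.2 hk))
      · exact Or.inr (mem_insert_of_mem _ (mem_image_of_mem u hk))
  have hinit : sepMaxCard T n ε ((Finset.range n).image u : Set X) ≤ n :=
    (sepMaxCard_le_card _).trans <| by
      exact_mod_cast Finset.card_image_le.trans_eq (Finset.card_range n)
  exact (sepMaxCard_mono hsplit).trans (sepMaxCard_union_le.trans (add_le_add hinit hn))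

theorem subEnt_insert_range (hu : BowenTendsto T u x) : subEnt T (insert x (range u)) = 0 :=
  le_antisymm
    (iSup₂_le fun _ hε => sepEnt_nonpos_of_eventually_sepMaxCard_le (C := 1) <| by
      simpa using hu.eventually_sepMaxCard_insert_range_le hε)
    (subEnt_nonneg (insert_nonempty _ _))

end BowenTendsto

end BowenTendsto

theorem exists_injective_seq_tendsto [TopologicalSpace X] [FirstCountableTopology X] {K : Set X}
    (hK : IsCompact K) (hinf : K.Infinite) :
    ∃ x ∈ K, ∃ u : ℕ → X, u.Injective ∧ (∀ k, u k ∈ K) ∧ Tendsto u atTop (𝓝 x) := by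
  let v : ℕ ↪ K := hinf.natEmbedding K
  obtain ⟨x, hx, φ, hφ, hlim⟩ := hK.tendsto_subseq fun k => (v k).2
  exact ⟨x, hx, _, (Subtype.val_injective.comp v.injective).comp hφ.injective,
    fun k => (v (φ k)).2, hlim⟩

theorem exists_countable_compact_zero_entropy_general [PseudoMetricSpace X] {T : X → X}
    (hT : Continuous T) {K : Set X} (hK : IsCompact K) (hinf : K.Infinite) :
    ∃ Kinf : Set X, Kinf ⊆ K ∧ Kinf.Countable ∧ Kinf.Infinite ∧ IsCompact Kinf ∧
      subEnt T Kinf = 0 := by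
  obtain ⟨x, hx, v, hvinj, hvK, hv⟩ := exists_injective_seq_tendsto hK hinf
  obtain ⟨φ, hφ, hbowen⟩ := exists_strictMono_bowenTendsto hT hv
  have huinj : (v ∘ φ).Injective := hvinj.comp hφ.injective
  refine ⟨insert x (range (v ∘ φ)), insert_subset hx (range_subset_iff.2 fun k => hvK (φ k)),
    (countable_range _).insert x, (infinite_range_of_injective huinj).mono (subset_insert _ _),
    (hv.comp hφ.tendsto_atTop).isCompact_insert_range, hbowen.subEnt_insert_range⟩

/-- If `K` is a compact subset with `h(T,K) > 0`, then there is a countably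
infinite compact subset `K_∞ ⊆ K` with `h(T,K_∞) = 0`. -/
theorem exists_countable_compact_zero_entropy {X : Type*} [MetricSpace X] [CompactSpace X]
    (T : X ≃ₜ X) (K : Set X) (hK : IsCompact K) (hpos : 0 < subEnt (⇑T) K) :
    ∃ Kinf : Set X, Kinf ⊆ K ∧ Kinf.Countable ∧ Kinf.Infinite ∧ IsCompact Kinf ∧
      subEnt (⇑T) Kinf = 0 :=
  exists_countable_compact_zero_entropy_general T.continuous hK (infinite_of_subEnt_pos hpos)
end
end

section
/- (Bridge Lemma.) Let (X,T) be a general topological dynamical system, U a finite Borel cover of X and K ⊆ X. Then h^B_U(T,K) ≤ liminf_{n→∞} (1/n) log N(U_0^{n−1}, K) ≤ h_U(T,K). -/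
open Filter Set Metric MeasureTheory
open scoped ENNReal Topology

noncomputable section

variable {X Y : Type*}

/-!
Every member of `U_0^{n-1}` follows `U` for at least `n` steps, so a cover of `K` by `N` members
of `U_0^{n-1}` has Bowen sum at most `N · e^{-λn}` when `λ ≥ 0`. Hence
`m_{T,U}(K,λ,k) ≤ N(U_0^{n-1},K) · e^{-λn}` for all `n ≥ k`, and if `λ` exceeds the lower
exponential growth rate of `N(U_0^{n-1},K)`, the right-hand side is arbitrarily small for
infinitely many `n`. For `K ≠ ∅` that growth rate is nonnegative, so only `λ ≥ 0` matter;
for `K = ∅` both `h^B_U(T,K)` and the growth rate are `-∞`.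
-/

theorem refines_covJoin_iff {E : Set X} {U V : Finset (Set X)} :
    Refines E (covJoin U V) ↔ Refines E U ∧ Refines E V := by
  simp only [Refines, covJoin, Finset.mem_image, Finset.mem_product]
  constructor
  · rintro ⟨_, ⟨⟨A, B⟩, ⟨hA, hB⟩, rfl⟩, hE⟩
    exact ⟨⟨A, hA, hE.trans inter_subset_left⟩, ⟨B, hB, hE.trans inter_subset_right⟩⟩
  · rintro ⟨⟨A, hA, hEA⟩, ⟨B, hB, hEB⟩⟩
    exact ⟨A ∩ B, ⟨(A, B), ⟨hA, hB⟩, rfl⟩, subset_inter hEA hEB⟩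

theorem refines_image_preimage_iff [DecidableEq (Set X)] {f : X → Y} {E : Set X}
    {U : Finset (Set Y)} :
    Refines E (U.image fun A => f ⁻¹' A) ↔ Refines (f '' E) U := by
  simp only [Refines, Finset.exists_mem_image, image_subset_iff]

theorem refines_dynCov_iff {T : X → X} {U : Finset (Set X)} {n : ℕ} {E : Set X} :
    Refines E (dynCov T U n) ↔ ∀ i < n, Refines (T^[i] '' E) U := by
  induction n with
  | zero => simp [Refines, dynCov]
  | succ n ih =>
    let := Classical.decEq (Set X)
    rw [dynCov, refines_covJoin_iff, refines_image_preimage_iff, ih, Nat.forall_lt_succ_right]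

theorem Refines.dynCov_of_le {T : X → X} {U : Finset (Set X)} {k n : ℕ} {E : Set X}
    (hE : Refines E (dynCov T U n)) (hkn : k ≤ n) : Refines E (dynCov T U k) :=
  refines_dynCov_iff.2 fun i hi => refines_dynCov_iff.1 hE i (hi.trans_le hkn)

theorem Refines.natCast_le_nTU {T : X → X} {U : Finset (Set X)} {n : ℕ} {E : Set X}
    (hE : Refines E (dynCov T U n)) : (n : ℕ∞) ≤ nTU T U E :=
  le_iSup₂_of_le n (refines_dynCov_iff.1 hE) le_rfl

theorem expWeight_natCast (lam : ℝ) (n : ℕ) :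
    expWeight lam n = ENNReal.ofReal (Real.exp (-(lam * n))) := by
  simp [expWeight]

theorem expWeight_antitone {lam : ℝ} (hlam : 0 ≤ lam) : Antitone (expWeight lam) := by
  intro m n hmn
  rcases hlam.eq_or_lt with rfl | hlam
  · simp [expWeight]
  · induction n with
    | top => simp [expWeight, hlam]
    | coe n =>
      lift m to ℕ using ne_top_of_le_ne_top (ENat.natCast_ne_top n) hmn
      have hmn : m ≤ n := mod_cast hmn
      rw [expWeight_natCast, expWeight_natCast]
      gcongr

theorem exp_mul_expWeight_natCast (s lam : ℝ) (n : ℕ) :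
    EReal.exp (s * n) * expWeight lam n = expWeight (lam - s) n := by
  rw [expWeight_natCast, expWeight_natCast, ← EReal.coe_natCast, ← EReal.coe_mul, EReal.exp_coe,
    ← ENNReal.ofReal_mul (Real.exp_nonneg _), ← Real.exp_add]
  ring_nf

theorem tendsto_expWeight_natCast {lam : ℝ} (hlam : 0 < lam) :
    Tendsto (fun n : ℕ => expWeight lam n) atTop (𝓝 0) := by
  simp only [expWeight_natCast]
  rw [← ENNReal.ofReal_zero]
  exact ENNReal.tendsto_ofReal <| Real.tendsto_exp_neg_atTop_nhds_zero.comp <|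
    tendsto_natCast_atTop_atTop.const_mul_atTop hlam

theorem expGrowthInf_nonneg_of_one_le {u : ℕ → ℝ≥0∞} (hu : ∀ n, 1 ≤ u n) :
    0 ≤ ExpGrowth.expGrowthInf u :=
  (ExpGrowth.expGrowthInf_const one_ne_zero ENNReal.one_ne_top).symm.trans_le
    (ExpGrowth.expGrowthInf_monotone hu)

theorem liminf_mul_expWeight_eq_zero_of_expGrowthInf_lt {u : ℕ → ℝ≥0∞} {lam : ℝ}
    (h : ExpGrowth.expGrowthInf u < lam) :
    liminf (fun n : ℕ => u n * expWeight lam n) atTop = 0 := by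
  obtain ⟨s, hus, hsl⟩ := EReal.lt_iff_exists_real_btwn.1 h
  have hsl : 0 < lam - s := sub_pos.2 (mod_cast hsl)
  have hfreq : ∃ᶠ n : ℕ in atTop, u n * expWeight lam n ≤ expWeight (lam - s) n := by
    refine (ExpGrowth.frequently_le_exp hus).mono fun n hn => ?_
    rw [← exp_mul_expWeight_natCast]
    gcongr
  refine le_antisymm ?_ zero_le
  calc liminf (fun n : ℕ => u n * expWeight lam n) atTop
      ≤ limsup (fun n : ℕ => expWeight (lam - s) n) atTop :=
        liminf_le_limsup_of_frequently_le hfreq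
    _ = 0 := (tendsto_expWeight_natCast hsl).limsup_eq

theorem one_le_covCard (U : Finset (Set X)) {K : Set X} (hK : K.Nonempty) :
    1 ≤ covCard U K := by
  refine le_iInf₂ fun V ⟨_, hKV⟩ => ?_
  obtain ⟨A, hA, -⟩ := hKV hK.some_mem
  exact mod_cast Finset.card_pos.2 ⟨A, hA⟩

theorem mTUlim_empty (T : X → X) (U : Finset (Set X)) (lam : ℝ) : mTUlim T U ∅ lam = 0 := by
  refine ENNReal.iSup_eq_zero.2 fun k => le_antisymm ?_ zero_le
  exact iInf₂_le_of_le ∅ ⟨countable_empty, empty_subset _, by simp⟩ (by simp)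

theorem hBU_empty (T : X → X) (U : Finset (Set X)) : hBU T U ∅ = ⊥ :=
  (EReal.eq_bot_iff_forall_lt _).2 fun y =>
    (iInf₂_le (y - 1) (mTUlim_empty T U (y - 1))).trans_lt (mod_cast sub_one_lt y)

theorem mTU_le_covCard_mul (T : X → X) (U : Finset (Set X)) (K : Set X) {lam : ℝ}
    (hlam : 0 ≤ lam) {k n : ℕ} (hkn : k ≤ n) :
    mTU T U K lam k ≤ covCard (dynCov T U n) K * expWeight lam n := by
  have hpos : expWeight lam n ≠ 0 := by simp [expWeight_natCast, Real.exp_pos]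
  have hfin : expWeight lam n ≠ ∞ := by simp [expWeight_natCast]
  simp only [covCard, ENNReal.iInf_mul_of_ne hpos hfin]
  refine le_iInf₂ fun V ⟨hVU, hKV⟩ => ?_
  have hV : ∀ E ∈ V, Refines E (dynCov T U n) := fun E hE => ⟨E, hVU hE, Subset.rfl⟩
  calc mTU T U K lam k
      ≤ ∑' E : (V : Set (Set X)), expWeight lam (nTU T U E) :=
        iInf₂_le _ ⟨V.countable_toSet, hKV, fun E hE => (hV E hE).dynCov_of_le hkn⟩
    _ ≤ ∑' _ : (V : Set (Set X)), expWeight lam n :=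
        ENNReal.tsum_le_tsum fun E => expWeight_antitone hlam (hV E E.2).natCast_le_nTU
    _ = V.card * expWeight lam n := by simp

theorem mTUlim_eq_zero_of_expGrowthInf_lt {T : X → X} {U : Finset (Set X)} {K : Set X} {lam : ℝ}
    (hlam : 0 ≤ lam) (h : ExpGrowth.expGrowthInf (fun n => covCard (dynCov T U n) K) < lam) :
    mTUlim T U K lam = 0 := by
  refine ENNReal.iSup_eq_zero.2 fun k => le_antisymm ?_ zero_le
  rw [← liminf_mul_expWeight_eq_zero_of_expGrowthInf_lt h]
  exact le_liminf_of_le (by isBoundedDefault) <|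
    (eventually_ge_atTop k).mono fun n hkn => mTU_le_covCard_mul T U K hlam hkn

theorem hBU_le_expGrowthInf_covCard (T : X → X) (U : Finset (Set X)) (K : Set X) :
    hBU T U K ≤ ExpGrowth.expGrowthInf fun n => covCard (dynCov T U n) K := by
  rcases K.eq_empty_or_nonempty with rfl | hK
  · exact (hBU_empty T U).trans_le bot_le
  refine EReal.le_of_forall_lt_iff_le.1 fun lam hlam => iInf₂_le lam ?_
  have hnonneg : 0 ≤ ExpGrowth.expGrowthInf fun n => covCard (dynCov T U n) K :=
    expGrowthInf_nonneg_of_one_le fun n => one_le_covCard (dynCov T U n) hK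
  exact mTUlim_eq_zero_of_expGrowthInf_lt (mod_cast hnonneg.trans hlam.le) hlam

theorem bridge_lemma_general (T : X → X) (U : Finset (Set X)) (K : Set X) :
    hBU T U K ≤
      (atTop.liminf fun n : ℕ => ENNReal.log (covCard (dynCov T U n) K) / (n : EReal)) ∧
    (atTop.liminf fun n : ℕ => ENNReal.log (covCard (dynCov T U n) K) / (n : EReal)) ≤
      hCov T U K :=
  ⟨hBU_le_expGrowthInf_covCard T U K, ExpGrowth.expGrowthInf_le_expGrowthSup⟩

/-- Bridge Lemma. For a GTDS `(X,T)`, a finite Borel cover `U` of `X` and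
`K ⊆ X`: `h^B_U(T,K) ≤ liminf_n (1/n) log N(U_0^{n-1},K) ≤ h_U(T,K)`. -/
theorem bridge_lemma {X : Type*} [MetricSpace X] [CompactSpace X]
    [MeasurableSpace X] [BorelSpace X]
    (T : X → X) (hT : Continuous T) (U : Finset (Set X))
    (hUm : ∀ A ∈ U, MeasurableSet A) (hUc : ⋃₀ (↑U : Set (Set X)) = univ) (K : Set X) :
    hBU T U K ≤
      (atTop.liminf fun n : ℕ => ENNReal.log (covCard (dynCov T U n) K) / (n : EReal)) ∧
    (atTop.liminf fun n : ℕ => ENNReal.log (covCard (dynCov T U n) K) / (n : EReal)) ≤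
      hCov T U K :=
  bridge_lemma_general T U K
end
end

section
/- (Uniform Mass Distribution Principle.) Let (X,T) be a general topological dynamical system, c > 0, d > 0, Z ⊆ X and α a finite Borel partition of X. If there exists a Borel probability measure θ on X such that θ(α_0^{n−1}(x)) ≥ c e^{−n d} for every x ∈ Z and every n ∈ ℕ, then h_α(T,Z) ≤ d. -/
/-!
The atoms of `α_0^{n-1}` that meet `Z` cover `Z`, are pairwise disjoint, and have mass at least
`c e^{-nd}` each; since their total mass is at most `1`, there are at most `c⁻¹ e^{nd}` of them.
The constant `c⁻¹` does not affect the exponential growth rate.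
-/

open Filter Set Metric MeasureTheory
open scoped ENNReal Topology

noncomputable section

variable {X Y : Type*}

open ExpGrowth

lemma mem_covJoin {U V : Finset (Set X)} {A : Set X} :
    A ∈ covJoin U V ↔ ∃ B ∈ U, ∃ C ∈ V, B ∩ C = A := by
  simp only [covJoin, Finset.mem_image, Finset.mem_product, Prod.exists, exists_and_left,
    and_assoc]

lemma covCard_le_card {U V : Finset (Set X)} {K : Set X} (hVU : V ⊆ U)
    (hKV : K ⊆ ⋃₀ (↑V : Set (Set X))) : covCard U K ≤ V.card :=
  iInf₂_le V ⟨hVU, hKV⟩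

lemma hCov_eq_expGrowthSup (T : X → X) (U : Finset (Set X)) (K : Set X) :
    hCov T U K = expGrowthSup fun n => covCard (dynCov T U n) K :=
  rfl

namespace IsFinPartition

variable [MeasurableSpace X] {P Q : Finset (Set X)} {A B : Set X} {x : X}

lemma exists_mem (hP : IsFinPartition P) (x : X) : ∃ A ∈ P, x ∈ A :=
  mem_sUnion.1 (hP.2.1 ▸ mem_univ x)

lemma eq_of_mem (hP : IsFinPartition P) (hA : A ∈ P) (hB : B ∈ P) (hxA : x ∈ A) (hxB : x ∈ B) :
    A = B :=
  hP.2.2.eq hA hB (not_disjoint_iff.2 ⟨x, hxA, hxB⟩)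

lemma atomAt_eq (hP : IsFinPartition P) (hA : A ∈ P) (hx : x ∈ A) : atomAt P x = A :=
  Subset.antisymm (sUnion_subset fun _ hB => (hP.eq_of_mem hB.1 hA hB.2 hx).subset)
    (subset_sUnion_of_mem ⟨hA, hx⟩)

lemma singleton_univ : IsFinPartition {(univ : Set X)} := by
  simp [IsFinPartition]

protected lemma preimage [MeasurableSpace Y] [DecidableEq (Set Y)] (hP : IsFinPartition P)
    {f : Y → X} (hf : Measurable f) : IsFinPartition (P.image fun A => f ⁻¹' A) := by
  refine ⟨Finset.forall_mem_image.2 fun A hA => hf (hP.1 A hA), eq_univ_of_forall fun y => ?_, ?_⟩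
  · obtain ⟨A, hA, hyA⟩ := hP.exists_mem (f y)
    exact ⟨f ⁻¹' A, Finset.mem_image_of_mem _ hA, hyA⟩
  · rw [Finset.coe_image]
    rintro _ ⟨A, hA, rfl⟩ _ ⟨B, hB, rfl⟩ hne
    exact (hP.2.2 hA hB (ne_of_apply_ne (f ⁻¹' ·) hne)).preimage f

protected lemma covJoin (hP : IsFinPartition P) (hQ : IsFinPartition Q) :
    IsFinPartition (covJoin P Q) := by
  refine ⟨fun _ hA => ?_, eq_univ_of_forall fun x => ?_, fun _ hA _ hA' hne => ?_⟩
  · obtain ⟨B, hB, C, hC, rfl⟩ := mem_covJoin.1 hA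
    exact (hP.1 B hB).inter (hQ.1 C hC)
  · obtain ⟨B, hB, hxB⟩ := hP.exists_mem x
    obtain ⟨C, hC, hxC⟩ := hQ.exists_mem x
    exact ⟨B ∩ C, mem_covJoin.2 ⟨B, hB, C, hC, rfl⟩, hxB, hxC⟩
  · obtain ⟨B, hB, C, hC, rfl⟩ := mem_covJoin.1 hA
    obtain ⟨B', hB', C', hC', rfl⟩ := mem_covJoin.1 hA'
    refine disjoint_left.2 fun x hx hx' => hne ?_
    rw [hP.eq_of_mem hB hB' hx.1 hx'.1, hQ.eq_of_mem hC hC' hx.2 hx'.2]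

protected lemma dynCov (hP : IsFinPartition P) {T : X → X} (hT : Measurable T) (n : ℕ) :
    IsFinPartition (dynCov T P n) := by
  induction n with
  | zero => exact singleton_univ
  | succ n ih => exact ih.covJoin (hP.preimage (hT.iterate n))

lemma sum_measure_le (hP : IsFinPartition P) (θ : Measure X) {V : Finset (Set X)} (hV : V ⊆ P) :
    ∑ A ∈ V, θ A ≤ θ univ :=
  sum_measure_le_measure_univ (fun A hA => (hP.1 A (hV hA)).nullMeasurableSet)
    fun _ hA _ hB hne => (hP.2.2 (hV hA) (hV hB) hne).aedisjoint

lemma covCard_mul_le (hP : IsFinPartition P) {θ : Measure X} {Z : Set X} {r : ℝ≥0∞}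
    (hr : ∀ x ∈ Z, r ≤ θ (atomAt P x)) : covCard P Z * r ≤ θ univ := by
  classical
  let V := P.filter fun A => (A ∩ Z).Nonempty
  have hVP : V ⊆ P := Finset.filter_subset _ _
  have hZV : Z ⊆ ⋃₀ (↑V : Set (Set X)) := fun x hx =>
    let ⟨A, hA, hxA⟩ := hP.exists_mem x
    ⟨A, Finset.mem_filter.2 ⟨hA, x, hxA, hx⟩, hxA⟩
  have hrV : ∀ A ∈ V, r ≤ θ A := fun A hA => by
    obtain ⟨hAP, x, hxA, hxZ⟩ := Finset.mem_filter.1 hA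
    exact hP.atomAt_eq hAP hxA ▸ hr x hxZ
  calc
    covCard P Z * r ≤ V.card * r := by gcongr; exact covCard_le_card hVP hZV
    _ = V.card • r := (nsmul_eq_mul _ _).symm
    _ ≤ ∑ A ∈ V, θ A := Finset.card_nsmul_le_sum V θ r hrV
    _ ≤ θ univ := hP.sum_measure_le θ hVP

end IsFinPartition

lemma expGrowthInf_ofReal_mul_exp {c : ℝ} (hc : 0 < c) (a : ℝ) :
    expGrowthInf (fun n : ℕ => ENNReal.ofReal (c * Real.exp (n * a))) = a := by
  have hmul (n : ℕ) : ENNReal.ofReal (c * Real.exp (n * a)) =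
      ENNReal.ofReal c * EReal.exp (a * n) := by
    rw [ENNReal.ofReal_mul hc.le, ← EReal.exp_coe, EReal.coe_mul, EReal.coe_natCast,
      mul_comm (a : EReal)]
  have hexp : expGrowthInf (fun n : ℕ => EReal.exp (a * n)) = a := expGrowthInf_exp
  apply le_antisymm
  · exact (expGrowthInf_le_of_eventually_le ENNReal.ofReal_ne_top
      (.of_forall fun n => (hmul n).le)).trans_eq hexp
  · exact hexp.symm.trans_le (expGrowthInf_of_eventually_ge (ENNReal.ofReal_pos.2 hc).ne'
      (.of_forall fun n => (hmul n).ge))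

theorem uniform_mass_distribution_general [MeasurableSpace X] {T : X → X} (hT : Measurable T)
    {α : Finset (Set X)} (hα : IsFinPartition α) {Z : Set X} (θ : Measure X) [IsFiniteMeasure θ]
    {r : ℕ → ℝ≥0∞} (hr : ∀ᶠ n in atTop, ∀ x ∈ Z, r n ≤ θ (atomAt (dynCov T α n) x)) :
    hCov T α Z ≤ -expGrowthInf r := by
  rw [hCov_eq_expGrowthSup, ← expGrowthSup_inv]
  -- Adding `1` keeps the constant nonzero when `θ = 0`, so that dividing by `r n = 0` is harmless.
  have hC : θ univ + 1 ≠ ∞ := by finiteness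
  refine expGrowthSup_le_of_eventually_le hC ?_
  filter_upwards [hr] with n hn
  rw [Pi.inv_apply, ← div_eq_mul_inv, ENNReal.le_div_iff_mul_le (.inr (by simp)) (.inr hC)]
  exact ((hα.dynCov hT n).covCard_mul_le hn).trans le_self_add

/-- Uniform Mass Distribution Principle. -/
theorem uniform_mass_distribution {X : Type*} [MetricSpace X] [CompactSpace X]
    [MeasurableSpace X] [BorelSpace X]
    (T : X → X) (hT : Continuous T) (c d : ℝ) (hc : 0 < c) (hd : 0 < d)
    (Z : Set X) (α : Finset (Set X)) (hα : IsFinPartition α)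
    (hbig : ∃ θ : Measure X, IsProbabilityMeasure θ ∧ ∀ x ∈ Z, ∀ n : ℕ, 0 < n →
      ENNReal.ofReal (c * Real.exp (-(n * d))) ≤ θ (atomAt (dynCov T α n) x)) :
    hCov T α Z ≤ ((d : ℝ) : EReal) := by
  obtain ⟨θ, _, hθ⟩ := hbig
  have hmass := (eventually_gt_atTop 0).mono fun n hn x hx => hθ x hx n hn
  simpa only [← mul_neg, expGrowthInf_ofReal_mul_exp hc, EReal.coe_neg, neg_neg] using
    uniform_mass_distribution_general hT.measurable hα θ hmass
end
end
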